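/- arXiv:1007.3345 — 3 statements merged into one kernel-verified Lean document; each statement's English description precedes it below -/
import Mathlib

section
/- Let I and I' be subsets of {0,…,s−1}. Then, as subsets of the functions a : M → K, one has A_I ∩ A_{I'} = A_{I∪I'}. In particular (the nontrivial inclusion), if a satisfies the decay condition D(I) and the decay condition D(I'), then a satisfies the decay condition D(I∪I'). -/
open Filter

/-- The index set `M ≅ ℤ^s × ℕ^(d-s)`: functions `n : Fin d → ℤ` with `n i ≥ 0`
for all `i ≥ s`. -/
def Mset (d s : ℕ) : Type := {n : Fin d → ℤ // ∀ i : Fin d, s ≤ (i : ℕ) → 0 ≤ n i}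

/-- The decay condition `D(I)` for a coefficient function `a : M → K`:
there is `λ ∈ (0,1)` such that for every `J ⊆ I`, `|a n| * λ ^ (n_J)` tends to `0`
along the cofinite filter on `M`, where `n_J = ∑_{i ∈ J} n i ∈ ℤ`. -/
def DecayCond {K : Type*} [Field K] (v : AbsoluteValue K ℝ) (d s : ℕ)
    (I : Finset (Fin d)) (a : Mset d s → K) : Prop :=
  ∃ l : ℝ, 0 < l ∧ l < 1 ∧
    ∀ J ⊆ I,
      Tendsto (fun n : Mset d s => v (a n) * l ^ (∑ i ∈ J, n.1 i)) cofinite (nhds 0)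

theorem DecayCond.tendsto_of_le {K : Type*} [Field K] (v : AbsoluteValue K ℝ) (d s : ℕ)
    (I : Finset (Fin d)) (a : Mset d s → K) (l m : ℝ) (hl : 0 < l) (hlm : l ≤ m) (hm : m < 1)
    (h : ∀ J ⊆ I,
      Tendsto (fun n : Mset d s => v (a n) * l ^ (∑ i ∈ J, n.1 i)) cofinite (nhds 0)) :
    ∀ J ⊆ I,
      Tendsto (fun n : Mset d s => v (a n) * m ^ (∑ i ∈ J, n.1 i)) cofinite (nhds 0) := by
  intro J hJ
  have hm0 : 0 < m := hl.trans_le hlm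
  have h0 := h ∅ (Finset.empty_subset _)
  have h1 := h0.add (h J hJ)
  rw [add_zero] at h1
  refine squeeze_zero (fun n => mul_nonneg (v.nonneg _) (zpow_nonneg hm0.le _)) (fun n => ?_) h1
  rw [← mul_add]
  refine mul_le_mul_of_nonneg_left ?_ (v.nonneg _)
  rw [Finset.sum_empty, zpow_zero]
  generalize (∑ i ∈ J, n.1 i) = k
  have hp : 0 < l ^ k := zpow_pos hl k
  obtain ⟨j, rfl | rfl⟩ := k.eq_nat_or_neg
  · rw [zpow_natCast m]
    have := pow_le_one₀ (n := j) hm0.le hm.le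
    linarith
  · rw [zpow_neg, zpow_neg, zpow_natCast, zpow_natCast]
    have : (m ^ j)⁻¹ ≤ (l ^ j)⁻¹ :=
      inv_anti₀ (pow_pos hl j) (pow_le_pow_left₀ hl.le hlm j)
    linarith

/-- Purity for overconvergence, claim 3(2): for subsets `I, I'` of `{0,…,s-1}`,
one has `A_I ∩ A_{I'} = A_{I ∪ I'}` as subsets of the functions `M → K`. -/
theorem inter_decay_eq_union_decay {K : Type*} [Field K] (v : AbsoluteValue K ℝ)
    (hv : IsNonarchimedean (v : K → ℝ))
    (d s : ℕ) (hsd : s ≤ d)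
    (I I' : Finset (Fin d)) (hI : ∀ i ∈ I, (i : ℕ) < s) (hI' : ∀ i ∈ I', (i : ℕ) < s) :
    {a : Mset d s → K | DecayCond v d s I a} ∩ {a : Mset d s → K | DecayCond v d s I' a}
      = {a : Mset d s → K | DecayCond v d s (I ∪ I') a} := by
  ext a
  simp only [Set.mem_inter_iff, Set.mem_setOf_eq]
  constructor
  · rintro ⟨⟨l, hl0, hl1, h⟩, ⟨l', hl0', hl1', h'⟩⟩
    have hm1 : max l l' < 1 := max_lt hl1 hl1'
    have H := DecayCond.tendsto_of_le v d s I a l _ hl0 (le_max_left l l') hm1 h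
    have H' := DecayCond.tendsto_of_le v d s I' a l' _ hl0' (le_max_right l l') hm1 h'
    have hm0 : 0 < max l l' := lt_max_of_lt_left hl0
    generalize max l l' = m at *
    have hr0 : 0 < Real.sqrt m := Real.sqrt_pos.2 hm0
    have hrm : m = Real.sqrt m * Real.sqrt m := (Real.mul_self_sqrt hm0.le).symm
    have hr1 : Real.sqrt m < 1 := by nlinarith
    refine ⟨Real.sqrt m, hr0, hr1, fun J hJ => ?_⟩
    generalize Real.sqrt m = r at *
    subst hrm
    have h1 := H (J ∩ I) Finset.inter_subset_right
    have h2 := H' (J \ I) (fun i hi => by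
      have := Finset.mem_sdiff.1 hi
      exact (Finset.mem_union.1 (hJ this.1)).resolve_left this.2)
    have h3 := h1.add h2
    rw [add_zero] at h3
    refine squeeze_zero (fun n => mul_nonneg (v.nonneg _) (zpow_nonneg hr0.le _))
      (fun n => ?_) h3
    rw [← mul_add]
    refine mul_le_mul_of_nonneg_left ?_ (v.nonneg _)
    rw [← Finset.sum_inter_add_sum_sdiff J I, zpow_add₀ hr0.ne', mul_zpow, mul_zpow]
    nlinarith [sq_nonneg (r ^ (∑ i ∈ J ∩ I, n.1 i) - r ^ (∑ i ∈ J \ I, n.1 i)),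
      zpow_pos hr0 (∑ i ∈ J ∩ I, n.1 i), zpow_pos hr0 (∑ i ∈ J \ I, n.1 i)]
  · rintro ⟨l, hl0, hl1, h⟩
    exact ⟨⟨l, hl0, hl1, fun J hJ => h J (hJ.trans Finset.subset_union_left)⟩,
      ⟨l, hl0, hl1, fun J hJ => h J (hJ.trans Finset.subset_union_right)⟩⟩
end

section
/- Fix an integer q ≥ 2 (in the paper, q is a power of the residue characteristic p). Let R := {r : Fin d → ℤ | 0 ≤ r_i ≤ q−1 for all i}. For a : M → K and r ∈ R define the r-th q-section a_r : M → K by a_r(m) := a(q·m + r) (note q·m + r ∈ M whenever m ∈ M). Then for every subset I of {0,…,s−1}: a ∈ A_I if and only if a_r ∈ A_I for every r ∈ R. Equivalently, the map (b_r)_{r∈R} ↦ a, where a(q·m + r) := b_r(m) for m ∈ M and r ∈ R, is a bijection from (A_I)^R onto A_I. (This is the coefficientwise statement that A_{I,K} is freely generated, as a module over itself via the Frobenius lift t_i ↦ t_i^q, by the monomials t^n with 0 ≤ n_i ≤ q−1; in particular the Frobenius endomorphism of A_{I,K} is flat.) -/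
open Filter

/-- The `r`-th `q`-section of `a : M → K`, namely `m ↦ a (q • m + r)`. -/
def qSection {K : Type*} [Field K] (d s : ℕ) (q : ℤ) (hq : 0 ≤ q)
    (r : Fin d → ℤ) (hr : ∀ i, 0 ≤ r i)
    (a : Mset d s → K) (m : Mset d s) : K :=
  a ⟨fun i => q * m.1 i + r i, fun i hi => add_nonneg (mul_nonneg hq (m.2 i hi)) (hr i)⟩

/-- The map `m ↦ q m + r`. -/
def phiMap (d s : ℕ) (q : ℤ) (hq : 0 ≤ q) (r : Fin d → ℤ) (hr : ∀ i, 0 ≤ r i)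
    (m : Mset d s) : Mset d s :=
  ⟨fun i => q * m.1 i + r i, fun i hi => add_nonneg (mul_nonneg hq (m.2 i hi)) (hr i)⟩

theorem phiMap_injective (d s : ℕ) (q : ℤ) (hq : 0 < q) (r : Fin d → ℤ) (hr : ∀ i, 0 ≤ r i) :
    Function.Injective (phiMap d s q hq.le r hr) := by
  intro m m' h
  apply Subtype.ext
  funext i
  have h1 : q * m.1 i + r i = q * m'.1 i + r i := congrFun (congrArg Subtype.val h) i
  exact mul_left_cancel₀ hq.ne' (add_right_cancel h1)

theorem phiMap_weight (d s : ℕ) (q : ℤ) (hq : 0 ≤ q) (r : Fin d → ℤ) (hr : ∀ i, 0 ≤ r i)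
    (m : Mset d s) (J : Finset (Fin d)) (l : ℝ) (hl : 0 < l) :
    l ^ (∑ i ∈ J, (phiMap d s q hq r hr m).1 i)
      = (l ^ q) ^ (∑ i ∈ J, m.1 i) * l ^ (∑ i ∈ J, r i) := by
  have h : ∑ i ∈ J, (phiMap d s q hq r hr m).1 i = q * ∑ i ∈ J, m.1 i + ∑ i ∈ J, r i := by
    rw [Finset.mul_sum, ← Finset.sum_add_distrib]; rfl
  rw [h, zpow_add₀ hl.ne', zpow_mul]

theorem decay_mono {K : Type*} [Field K] (v : AbsoluteValue K ℝ) (d s : ℕ)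
    (I : Finset (Fin d)) (a : Mset d s → K) (l l' : ℝ) (hl : 0 < l) (hll : l ≤ l') (hl' : l' < 1)
    (h : ∀ J ⊆ I,
      Tendsto (fun n : Mset d s => v (a n) * l ^ (∑ i ∈ J, n.1 i)) cofinite (nhds 0)) :
    ∀ J ⊆ I,
      Tendsto (fun n : Mset d s => v (a n) * l' ^ (∑ i ∈ J, n.1 i)) cofinite (nhds 0) := by
  intro J hJ
  have h0 := (h ∅ (Finset.empty_subset _)).add (h J hJ)
  have hp : 0 < l' := hl.trans_le hll
  rw [add_zero] at h0
  refine squeeze_zero (fun n => by positivity) (fun n => ?_) h0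
  rw [← mul_add]
  refine mul_le_mul_of_nonneg_left ?_ (v.nonneg _)
  have p1 : 0 < l ^ (∑ i ∈ J, n.1 i) := by positivity
  rw [Finset.sum_empty, zpow_zero]
  generalize ∑ i ∈ J, n.1 i = k at *
  rcases le_total 0 k with hk | hk
  · have : l' ^ k ≤ 1 := by
      lift k to ℕ using hk
      rw [zpow_natCast]
      exact pow_le_one₀ hp.le hl'.le
    linarith
  · obtain ⟨j, rfl⟩ : ∃ j : ℕ, k = -(j : ℤ) := ⟨k.natAbs, by omega⟩
    have : l' ^ (-(j : ℤ)) ≤ l ^ (-(j : ℤ)) := by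
      rw [zpow_neg, zpow_neg, zpow_natCast, zpow_natCast]
      gcongr
    linarith

theorem phiMap_surj (d s : ℕ) (q : ℤ) (hq : 0 < q) (n : Mset d s) :
    ∃ (r : Fin d → ℤ) (hr : ∀ i, 0 ≤ r i ∧ r i ≤ q - 1) (m : Mset d s),
      phiMap d s q hq.le r (fun i => (hr i).1) m = n := by
  refine ⟨fun i => n.1 i % q, fun i => ⟨Int.emod_nonneg _ hq.ne', ?_⟩,
    ⟨fun i => n.1 i / q, fun i hi => Int.ediv_nonneg (n.2 i hi) hq.le⟩, ?_⟩
  · have := Int.emod_lt_of_pos (n.1 i) hq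
    show n.1 i % q ≤ q - 1
    omega
  · apply Subtype.ext
    funext i
    exact Int.mul_ediv_add_emod (n.1 i) q

/-- `a` lies in `A_I` if and only if all of its `q`-sections `a_r`,
for `r : Fin d → ℤ` with `0 ≤ r i ≤ q - 1`, lie in `A_I`.  This is the
coefficientwise statement that `A_{I,K}` is freely generated over itself via the
Frobenius lift `t_i ↦ t_i^q` by the monomials `t^n` with `0 ≤ n_i ≤ q-1`. -/
theorem decay_iff_forall_qSection_decay {K : Type*} [Field K] (v : AbsoluteValue K ℝ)
    (hv : IsNonarchimedean (v : K → ℝ))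
    (d s : ℕ) (hsd : s ≤ d) (q : ℤ) (hq : 2 ≤ q)
    (I : Finset (Fin d)) (hI : ∀ i ∈ I, (i : ℕ) < s)
    (a : Mset d s → K) :
    DecayCond v d s I a ↔
      ∀ (r : Fin d → ℤ) (hr : ∀ i, 0 ≤ r i ∧ r i ≤ q - 1),
        DecayCond v d s I
          (qSection d s q (by omega) r (fun i => (hr i).1) a) := by
  have hq0 : 0 < q := by omega
  constructor
  · rintro ⟨l, hl, hl1, h⟩ r hr
    refine ⟨l ^ q, by positivity, by
      lift q to ℕ using hq0.le
      rw [zpow_natCast]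
      exact pow_lt_one₀ hl.le hl1 (by omega), fun J hJ => ?_⟩
    have h1 := ((h J hJ).comp (phiMap_injective d s q hq0 r
      (fun i => (hr i).1)).tendsto_cofinite).mul_const (l ^ (∑ i ∈ J, r i))⁻¹
    rw [zero_mul] at h1
    refine h1.congr fun m => ?_
    have hne : l ^ (∑ i ∈ J, r i) ≠ 0 := by positivity
    simp only [Function.comp]
    rw [phiMap_weight d s q hq0.le r _ m J l hl, mul_assoc, mul_inv_cancel_right₀ hne]
    rfl
  · intro h
    let R := Set.Icc (0 : Fin d → ℤ) (fun _ => q - 1)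
    have hR : ∀ r : R, ∀ i, 0 ≤ r.1 i ∧ r.1 i ≤ q - 1 := fun r i => ⟨r.2.1 i, r.2.2 i⟩
    have hev : ∀ᶠ l in nhdsWithin (1 : ℝ) (Set.Iio 1), ∀ r : R, ∀ J ⊆ I,
        Tendsto (fun m : Mset d s =>
          v (qSection d s q hq0.le r.1 (fun i => (hR r i).1) a m) * l ^ (∑ i ∈ J, m.1 i))
          cofinite (nhds 0) := by
      rw [eventually_all]
      intro r
      obtain ⟨l, hl, hl1, hd⟩ := h r.1 (hR r)
      filter_upwards [Ioo_mem_nhdsLT hl1] with l' hl'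
      exact decay_mono v d s I _ l l' hl hl'.1.le hl'.2 hd
    obtain ⟨μ, hμ, hμ0, hμ1⟩ := (hev.and (Ioo_mem_nhdsLT (zero_lt_one' ℝ))).exists
    have hqR : (0 : ℝ) < q := by exact_mod_cast hq0
    have hl : 0 < μ ^ ((q : ℝ)⁻¹) := Real.rpow_pos_of_pos hμ0 _
    have hlq : (μ ^ ((q : ℝ)⁻¹)) ^ q = μ := by
      rw [← Real.rpow_intCast, ← Real.rpow_mul hμ0.le, inv_mul_cancel₀ hqR.ne', Real.rpow_one]
    refine ⟨μ ^ ((q : ℝ)⁻¹), hl, Real.rpow_lt_one hμ0.le hμ1 (by positivity), fun J hJ => ?_⟩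
    generalize μ ^ ((q : ℝ)⁻¹) = l at *
    intro S hS
    rw [mem_map, mem_cofinite]
    have key : ∀ r : R, {m : Mset d s |
        v (a (phiMap d s q hq0.le r.1 (fun i => (hR r i).1) m)) *
          l ^ (∑ i ∈ J, (phiMap d s q hq0.le r.1 (fun i => (hR r i).1) m).1 i) ∉ S}.Finite := by
      intro r
      have h1 := (hμ r J hJ).mul_const (l ^ (∑ i ∈ J, r.1 i))
      rw [zero_mul] at h1
      have h2 := h1 hS
      rw [mem_map, mem_cofinite] at h2
      refine h2.subset fun m hm => ?_
      simp only [Set.mem_ofPred_eq] at hm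
      rw [phiMap_weight d s q hq0.le r.1 _ m J l hl, hlq, ← mul_assoc] at hm
      exact hm
    refine (Set.finite_iUnion fun r : R =>
      (key r).image (phiMap d s q hq0.le r.1 (fun i => (hR r i).1))).subset fun n hn => ?_
    obtain ⟨r, hr, m, rfl⟩ := phiMap_surj d s q hq0 n
    exact Set.mem_iUnion.2 ⟨⟨r, fun i => (hr i).1, fun i => (hr i).2⟩, m, hn, rfl⟩
end

section
/- Let D be a commutative ring, let B and C be subrings of D, and set A := B ∩ C (a subring of D). Let M be a finitely generated projective A-module. Consider the natural A-linear maps ι : M → D ⊗_A M, ι_B : B ⊗_A M → D ⊗_A M and ι_C : C ⊗_A M → D ⊗_A M (induced by the inclusions A ⊆ B ⊆ D and A ⊆ C ⊆ D). Then, inside D ⊗_A M, the image of ι equals the intersection of the image of ι_B with the image of ι_C; that is, range(ι_B) ∩ range(ι_C) = range(ι). -/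
open TensorProduct

section IntersectionDescent

variable {D : Type*} [CommRing D] (B C : Subring D)

/-- The subring `B` of `D` as an algebra over the subring `A := B ⊓ C`,
via the inclusion `B ⊓ C ≤ B`. -/
instance algebraInfLeft : Algebra ↥(B ⊓ C) ↥B :=
  (Subring.inclusion (inf_le_left : B ⊓ C ≤ B)).toAlgebra

/-- The subring `C` of `D` as an algebra over the subring `A := B ⊓ C`,
via the inclusion `B ⊓ C ≤ C`. -/
instance algebraInfRight : Algebra ↥(B ⊓ C) ↥C :=
  (Subring.inclusion (inf_le_right : B ⊓ C ≤ C)).toAlgebra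

/-- The inclusion `B → D` as a `(B ⊓ C)`-linear map. -/
def inclLeft : ↥B →ₗ[↥(B ⊓ C)] D where
  toFun x := (x : D)
  map_add' _ _ := rfl
  map_smul' _ _ := rfl

/-- The inclusion `C → D` as a `(B ⊓ C)`-linear map. -/
def inclRight : ↥C →ₗ[↥(B ⊓ C)] D where
  toFun x := (x : D)
  map_add' _ _ := rfl
  map_smul' _ _ := rfl

/-- Let `B, C` be subrings of a commutative ring `D` and `A := B ⊓ C`.  For a
finitely generated projective `A`-module `M`, inside `D ⊗[A] M` the intersection
of the image of `B ⊗[A] M` with the image of `C ⊗[A] M` equals the image of `M`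
(the image of the map `m ↦ 1 ⊗ m`). -/
theorem range_inter_range_eq_range
    (M : Type*) [AddCommGroup M] [Module ↥(B ⊓ C) M]
    [Module.Finite ↥(B ⊓ C) M] [Module.Projective ↥(B ⊓ C) M] :
    LinearMap.range (LinearMap.rTensor M (inclLeft B C))
        ⊓ LinearMap.range (LinearMap.rTensor M (inclRight B C))
      = LinearMap.range (TensorProduct.mk ↥(B ⊓ C) D M 1) := by
  classical
  obtain ⟨n, f, g, -, -, hfg⟩ := Module.Finite.exists_comp_eq_id_of_projective ↥(B ⊓ C) M
  -- the coordinate maps `D ⊗ M → D` of a dual basis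
  let c : Fin n → (D ⊗[↥(B ⊓ C)] M →ₗ[↥(B ⊓ C)] D) := fun i =>
    (TensorProduct.rid ↥(B ⊓ C) D).toLinearMap ∘ₗ
      LinearMap.lTensor D (LinearMap.proj i ∘ₗ g)
  have hc : ∀ i d m, c i (d ⊗ₜ m) = (g m i : D) * d := fun i d m => by
    simp only [c, LinearMap.comp_apply, LinearMap.lTensor_tmul, LinearEquiv.coe_coe,
      TensorProduct.rid_tmul, LinearMap.proj_apply]
    rfl
  have hm : ∀ m, ∑ i, g m i • f (Pi.single i 1) = m := fun m => by
    have h1 : f (g m) = m := LinearMap.congr_fun hfg m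
    conv_rhs => rw [← h1, pi_eq_sum_univ' (g m), map_sum]
    refine Finset.sum_congr rfl fun i _ => ?_
    rw [map_smul]
  have hx : ∀ x, ∑ i, c i x ⊗ₜ[↥(B ⊓ C)] f (Pi.single i 1) = x := fun x => by
    induction x using TensorProduct.induction_on with
    | zero => simp
    | add x y hx hy =>
      simp only [map_add, TensorProduct.add_tmul, Finset.sum_add_distrib, hx, hy]
    | tmul d m =>
      conv_rhs => rw [← hm m, TensorProduct.tmul_sum]
      refine Finset.sum_congr rfl fun i _ => ?_
      rw [hc, TensorProduct.tmul_smul, TensorProduct.smul_tmul']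
      rfl
  have hB : ∀ i y, c i (LinearMap.rTensor M (inclLeft B C) y) ∈ B := fun i y => by
    induction y using TensorProduct.induction_on with
    | zero => simp
    | add x y hx hy => rw [map_add, map_add]; exact B.add_mem hx hy
    | tmul d m =>
      rw [LinearMap.rTensor_tmul, hc]
      exact B.mul_mem (g m i).2.1 d.2
  have hC : ∀ i y, c i (LinearMap.rTensor M (inclRight B C) y) ∈ C := fun i y => by
    induction y using TensorProduct.induction_on with
    | zero => simp
    | add x y hx hy => rw [map_add, map_add]; exact C.add_mem hx hy
    | tmul d m =>
      rw [LinearMap.rTensor_tmul, hc]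
      exact C.mul_mem (g m i).2.2 d.2
  apply le_antisymm
  · rintro x ⟨⟨y, hy⟩, ⟨z, hz⟩⟩
    have hA : ∀ i, c i x ∈ B ⊓ C := fun i => ⟨hy ▸ hB i y, hz ▸ hC i z⟩
    refine ⟨∑ i, (⟨c i x, hA i⟩ : ↥(B ⊓ C)) • f (Pi.single i 1), ?_⟩
    conv_rhs => rw [← hx x]
    rw [map_sum]
    refine Finset.sum_congr rfl fun i _ => ?_
    rw [TensorProduct.mk_apply, TensorProduct.tmul_smul, TensorProduct.smul_tmul']
    congr 1
    exact mul_one (c i x)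
  · rintro _ ⟨m, rfl⟩
    exact ⟨⟨1 ⊗ₜ m, rfl⟩, ⟨1 ⊗ₜ m, rfl⟩⟩

end IntersectionDescent
end
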